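/- Let q be a prime power, a | (q+1), t = (q^2−1)/a, b ≤ a−3 with a+b odd. Suppose i_1, i_2, j_1, j_2, υ_1, υ_2 are integers with 0 ≤ j_1, j_2 ≤ q−1, j_1 ≠ j_2, (a−b+1)/2 ≤ υ_1, υ_2 ≤ (a+b−1)/2, and q·i + j_1 = υ_1·t, q·i + j_2 = υ_2·t for a common i. Then a contradiction arises: |j_1 − j_2| < q−1 but |υ_1 − υ_2|·t is either 0 or at least q−1, hence no such pair exists. -/

import Mathlib

/-!
Write `q + 1 = a * c`, so that `t = c * (q - 1)` with `c ≥ 1`. For `j₁ < j₂`, subtracting the two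
equations gives `j₂ - j₁ = (υ₂ - υ₁) * t ≥ t ≥ q - 1`, and since `0 ≤ j₁` and `j₂ ≤ q - 1` this
forces `j₁ = 0` and `t = q - 1`, hence `a = q + 1`. Then `q * i = υ₁ * (q - 1)`, so `q ∣ υ₁` by
coprimality, which is impossible since `0 < υ₁ ≤ (a + b - 1) / 2 ≤ a - 2 = q - 1`.
-/

/-- The case `j₁ < j₂`, with `p = q - 1` and `c = (q + 1) / a`; of the bounds on the multipliers
only `0 < υ₁ ≤ a - 2` is needed. -/
lemma no_pair_of_lt {p a c i j₁ j₂ υ₁ υ₂ : ℕ} (hp : 1 ≤ p) (hc : p + 2 = a * c)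
    (h2 : j₂ ≤ p) (hlt : j₁ < j₂) (hpos : 0 < υ₁) (hle : υ₁ + 2 ≤ a)
    (e1 : (p + 1) * i + j₁ = υ₁ * (c * p)) (e2 : (p + 1) * i + j₂ = υ₂ * (c * p)) :
    False := by
  have hc0 : 1 ≤ c := by
    rcases Nat.eq_zero_or_pos c with rfl | h
    · simp at hc
    · exact h
  have hυ : υ₁ + 1 ≤ υ₂ := by
    have h : υ₁ * (c * p) < υ₂ * (c * p) := by omega
    exact Nat.lt_of_mul_lt_mul_right h
  have hmul : (υ₁ + 1) * (c * p) ≤ υ₂ * (c * p) := Nat.mul_le_mul_right _ hυ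
  rw [Nat.add_mul, one_mul] at hmul
  have hcp : 1 * p ≤ c * p := Nat.mul_le_mul_right _ hc0
  have hj : j₁ = 0 := by omega
  have hc1 : c = 1 := by
    have h : c * p = 1 * p := by omega
    exact Nat.eq_of_mul_eq_mul_right hp h
  subst hc1 hj
  have hdvd : p + 1 ∣ υ₁ * p := ⟨i, by linarith⟩
  have hcop : Nat.Coprime (p + 1) p := by simp
  have := Nat.le_of_dvd hpos (hcop.dvd_of_dvd_mul_right hdvd)
  omega

theorem stmt13 (q a t b : ℕ) (hq : IsPrimePow q) (ha : a ∣ q + 1)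
    (ht : t = (q ^ 2 - 1) / a) (hb : b + 3 ≤ a) (hab : (a + b) % 2 = 1) :
    ¬ ∃ i j₁ j₂ υ₁ υ₂ : ℕ,
      j₁ ≤ q - 1 ∧ j₂ ≤ q - 1 ∧ j₁ ≠ j₂ ∧
      (a - b + 1) / 2 ≤ υ₁ ∧ υ₁ ≤ (a + b - 1) / 2 ∧
      (a - b + 1) / 2 ≤ υ₂ ∧ υ₂ ≤ (a + b - 1) / 2 ∧
      q * i + j₁ = υ₁ * t ∧ q * i + j₂ = υ₂ * t := by
  rintro ⟨i, j₁, j₂, υ₁, υ₂, h1, h2, hne, l1, u1, l2, u2, e1, e2⟩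
  obtain ⟨c, hc⟩ := ha
  have hq1 := hq.one_lt
  obtain ⟨p, rfl⟩ : ∃ p, q = p + 1 := ⟨q - 1, by omega⟩
  have ht' : t = c * p := by
    have h : (p + 1) ^ 2 - 1 = a * (c * p) := by
      rw [← mul_assoc, ← hc]
      have : (p + 1) ^ 2 = (p + 1 + 1) * p + 1 := by ring
      omega
    rw [ht, h, Nat.mul_div_cancel_left _ (by omega)]
  rw [ht'] at e1 e2
  rcases Nat.lt_or_gt_of_ne hne with h | h
  · exact no_pair_of_lt (by omega) hc (by omega) h (by omega) (by omega) e1 e2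
  · exact no_pair_of_lt (by omega) hc (by omega) h (by omega) (by omega) e2 e1
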